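/- arXiv:1402.5029 — 2 statements merged into one kernel-verified Lean document; each statement's English description precedes it below -/
import Mathlib

section
/- If a mechanism K on a finite set X is OptQL(π, d, d_Q) — that is, K satisfies d-privacy and QL(K, π, d_Q) ≤ QL(K', π, d_Q) for every mechanism K' satisfying d-privacy — then K is OptPriv(π, d_Q, d_Q, q) for q = QL(K, π, d_Q); that is: (1) QL(K, π, d_Q) ≤ q, and (2) for every mechanism K' with QL(K', π, d_Q) ≤ q, one has AdvError(K', π, d_Q) ≤ AdvError(K, π, d_Q). -/
variable {X : Type*}

/-- A mechanism on a finite set `X`: a row-stochastic matrix. -/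
def IsMechanism [Fintype X] (K : X → X → ℝ) : Prop :=
  (∀ x z, 0 ≤ K x z) ∧ ∀ x, ∑ z, K x z = 1

/-- `K` satisfies `d`-privacy. -/
def DPrivate (d : X → X → ℝ) (K : X → X → ℝ) : Prop :=
  ∀ x x' z, K x z ≤ Real.exp (d x x') * K x' z

/-- A prior distribution on `X`. -/
def IsPrior [Fintype X] (pr : X → ℝ) : Prop :=
  (∀ x, 0 ≤ pr x) ∧ ∑ x, pr x = 1

/-- Quality loss of mechanism `K` under prior `pr` and metric `d`. -/
def QL [Fintype X] (K : X → X → ℝ) (pr : X → ℝ) (d : X → X → ℝ) : ℝ :=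
  ∑ x, ∑ z, pr x * K x z * d x z

/-- Composition (matrix product) of a mechanism with a remapping. -/
def comp [Fintype X] (K H : X → X → ℝ) : X → X → ℝ :=
  fun x x' => ∑ z, K x z * H z x'

/-- Adversary's expected error: infimum of quality loss over all remappings. -/
noncomputable def AdvError [Fintype X] (K : X → X → ℝ) (pr : X → ℝ) (d : X → X → ℝ) : ℝ :=
  sInf {q | ∃ H, IsMechanism H ∧ QL (comp K H) pr d = q}

/-- `K` is d-private with minimal quality loss among d-private mechanisms. -/
def OptQL [Fintype X] (pr : X → ℝ) (d dQ : X → X → ℝ) (K : X → X → ℝ) : Prop :=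
  IsMechanism K ∧ DPrivate d K ∧
    ∀ K', IsMechanism K' → DPrivate d K' → QL K pr dQ ≤ QL K' pr dQ

/-- `K` has quality loss at most `q` and maximal adversary error among such mechanisms. -/
def OptPriv [Fintype X] (pr : X → ℝ) (dA dQ : X → X → ℝ) (q : ℝ) (K : X → X → ℝ) : Prop :=
  QL K pr dQ ≤ q ∧
    ∀ K', IsMechanism K' → QL K' pr dQ ≤ q → AdvError K' pr dA ≤ AdvError K pr dA

/-- A walk in the graph with edge relation `E` from `x` to `x'`. -/
def IsWalk (E : X → X → Prop) (x x' : X) (p : List X) : Prop :=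
  p.head? = some x ∧ p.getLast? = some x' ∧ p.Chain' E

/-- The total weight of a walk. -/
def walkWeight (w : X → X → ℝ) (p : List X) : ℝ :=
  ((p.zip p.tail).map fun e => w e.1 e.2).sum

/-- Shortest-path distance induced by a weighted graph. -/
noncomputable def graphDist (E : X → X → Prop) (w : X → X → ℝ) (x x' : X) : ℝ :=
  sInf {c | ∃ p : List X, IsWalk E x x' p ∧ walkWeight w p = c}

/-! Remapping the output of a `d`-private mechanism gives a `d`-private mechanism, so no remapping
can lower the loss of an optimal `K`: its adversary error is at least its quality loss `q`. A
competitor with loss at most `q` has adversary error at most `q`, because the adversary may leave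
the reported value unchanged. -/

section

variable [Fintype X] {K H d : X → X → ℝ} {pr : X → ℝ} {q : ℝ}

theorem of_comp (K H : X → X → ℝ) : Matrix.of (comp K H) = Matrix.of K * Matrix.of H := rfl

theorem comp_one [DecidableEq X] (K : X → X → ℝ) : comp K (1 : Matrix X X ℝ) = K :=
  Matrix.mul_one (Matrix.of K)

theorem isMechanism_iff_of_mem_rowStochastic [DecidableEq X] :
    IsMechanism K ↔ Matrix.of K ∈ Matrix.rowStochastic ℝ X :=
  Matrix.mem_rowStochastic_iff_sum.symm

theorem isMechanism_one [DecidableEq X] : IsMechanism (1 : Matrix X X ℝ) :=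
  isMechanism_iff_of_mem_rowStochastic.2 (one_mem _)

theorem IsMechanism.comp (hK : IsMechanism K) (hH : IsMechanism H) : IsMechanism (comp K H) := by
  classical
  rw [isMechanism_iff_of_mem_rowStochastic] at hK hH ⊢
  rw [of_comp]
  exact mul_mem hK hH

theorem IsMechanism.le_one (hK : IsMechanism K) (x z : X) : K x z ≤ 1 := by
  classical
  exact Matrix.le_one_of_mem_rowStochastic (isMechanism_iff_of_mem_rowStochastic.1 hK)

theorem DPrivate.comp (hK : DPrivate d K) (hH : ∀ y z, 0 ≤ H y z) : DPrivate d (comp K H) :=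
  fun x x' z ↦ calc
    ∑ y, K x y * H y z
      ≤ ∑ y, Real.exp (d x x') * K x' y * H y z :=
        Finset.sum_le_sum fun y _ ↦ mul_le_mul_of_nonneg_right (hK x x' y) (hH y z)
    _ = Real.exp (d x x') * ∑ y, K x' y * H y z := by simp only [mul_assoc, Finset.mul_sum]

theorem IsMechanism.abs_ql_le (hK : IsMechanism K) : |QL K pr d| ≤ ∑ x, ∑ z, |pr x * d x z| := by
  have abs_term_le (x z : X) : |pr x * K x z * d x z| ≤ |pr x * d x z| := by
    rw [mul_right_comm, abs_mul, abs_of_nonneg (hK.1 x z)]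
    exact mul_le_of_le_one_right (abs_nonneg _) (hK.le_one x z)
  calc |QL K pr d|
      ≤ ∑ x, |∑ z, pr x * K x z * d x z| := Finset.abs_sum_le_sum_abs _ _
    _ ≤ ∑ x, ∑ z, |pr x * K x z * d x z| :=
        Finset.sum_le_sum fun x _ ↦ Finset.abs_sum_le_sum_abs _ _
    _ ≤ ∑ x, ∑ z, |pr x * d x z| :=
        Finset.sum_le_sum fun x _ ↦ Finset.sum_le_sum fun z _ ↦ abs_term_le x z

theorem IsMechanism.advError_le_ql_comp (hK : IsMechanism K) (hH : IsMechanism H) :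
    AdvError K pr d ≤ QL (_root_.comp K H) pr d := by
  refine csInf_le ⟨-∑ x, ∑ z, |pr x * d x z|, ?_⟩ ⟨H, hH, rfl⟩
  rintro _ ⟨H', hH', rfl⟩
  exact neg_le_of_abs_le (hK.comp hH').abs_ql_le

theorem IsMechanism.advError_le_ql (hK : IsMechanism K) : AdvError K pr d ≤ QL K pr d := by
  classical
  simpa only [comp_one] using hK.advError_le_ql_comp isMechanism_one

theorem le_advError (h : ∀ H, IsMechanism H → q ≤ QL (comp K H) pr d) : q ≤ AdvError K pr d := by
  classical
  refine le_csInf ⟨_, (1 : Matrix X X ℝ), isMechanism_one, rfl⟩ ?_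
  rintro _ ⟨H, hH, rfl⟩
  exact h H hH

theorem OptQL.ql_le_advError {dQ : X → X → ℝ} (h : OptQL pr d dQ K) :
    QL K pr dQ ≤ AdvError K pr dQ := by
  obtain ⟨hK, hd, hmin⟩ := h
  exact le_advError fun H hH ↦ hmin _ (hK.comp hH) (hd.comp hH.1)

theorem optPriv_of_le_advError (hql : QL K pr d ≤ q) (hadv : q ≤ AdvError K pr d) :
    OptPriv pr d d q K :=
  ⟨hql, fun _ hK' hq ↦ hK'.advError_le_ql.trans (hq.trans hadv)⟩

end

/-- an OptQL mechanism is OptPriv for `q = QL(K, pr, dQ)`. -/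
theorem optQL_implies_optPriv [Fintype X] (pr : X → ℝ) (d dQ : X → X → ℝ)
    (K : X → X → ℝ) (hpr : IsPrior pr) (hopt : OptQL pr d dQ K) :
    OptPriv pr dQ dQ (QL K pr dQ) K :=
  optPriv_of_le_advError le_rfl hopt.ql_le_advError
end

section
/- Let G = (X, E) be a weighted graph on a finite set X with nonnegative edge weights w, and let d_G be its induced shortest-path distance. If a mechanism K on X satisfies the privacy constraints on all edges — i.e., K(x)(z) ≤ e^{w(x,x')} · K(x')(z) for all z ∈ X and all edges (x,x') ∈ E — then K satisfies d_G-privacy: K(x)(z) ≤ e^{d_G(x,x')} · K(x')(z) for all x, x', z ∈ X joined by a path in G. -/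
variable {X : Type*}

/-!
Along a walk the edge constraints multiply, so `K x z ≤ exp c * K x' z` holds for every walk weight
`c`. The set of all real `c` satisfying this inequality is closed, hence it also contains the
infimum of the walk weights, whether or not that infimum is attained.
-/

section Walks

variable {E : X → X → Prop} {w : X → X → ℝ} {x x' : X} {p : List X}

theorem IsWalk.singleton (E : X → X → Prop) (x : X) : IsWalk E x x [x] :=
  ⟨rfl, rfl, List.isChain_singleton x⟩

theorem IsWalk.cons {a b : X} (hab : E a b) (hp : IsWalk E b x' (b :: p)) :
    IsWalk E a x' (a :: b :: p) :=
  ⟨rfl, List.getLast?_cons_cons.trans hp.2.1, List.isChain_cons_cons.mpr ⟨hab, hp.2.2⟩⟩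

@[elab_as_elim]
theorem IsWalk.head_induction_on {motive : ∀ x p, IsWalk E x x' p → Prop}
    (hp : IsWalk E x x' p) (singleton : motive x' [x'] (.singleton E x'))
    (cons : ∀ a b q (hab : E a b) (hq : IsWalk E b x' (b :: q)),
      motive b (b :: q) hq → motive a (a :: b :: q) (.cons hab hq)) :
    motive x p hp := by
  induction p generalizing x with
  | nil => cases hp.1
  | cons a q ih =>
    obtain ⟨hhead, hlast, hchain⟩ := hp
    obtain rfl : a = x := Option.some.inj hhead
    cases q with
    | nil =>
      obtain rfl : a = x' := Option.some.inj hlast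
      exact singleton
    | cons b q =>
      obtain ⟨hab, hchain⟩ := List.isChain_cons_cons.mp hchain
      have hq : IsWalk E b x' (b :: q) := ⟨rfl, List.getLast?_cons_cons.symm.trans hlast, hchain⟩
      exact cons a b q hab hq (ih hq)

theorem walkWeight_singleton (w : X → X → ℝ) (x : X) : walkWeight w [x] = 0 := rfl

theorem walkWeight_cons_cons (w : X → X → ℝ) (a b : X) (p : List X) :
    walkWeight w (a :: b :: p) = w a b + walkWeight w (b :: p) := rfl

theorem walkWeight_nonneg (hw : ∀ a b, E a b → 0 ≤ w a b) (hp : IsWalk E x x' p) :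
    0 ≤ walkWeight w p := by
  induction hp using IsWalk.head_induction_on with
  | singleton => exact (walkWeight_singleton w x').ge
  | cons a b q hab _ ih =>
    rw [walkWeight_cons_cons]
    exact add_nonneg (hw a b hab) ih

theorem le_exp_walkWeight_mul {f : X → ℝ} (hf : ∀ a b, E a b → f a ≤ Real.exp (w a b) * f b)
    (hp : IsWalk E x x' p) : f x ≤ Real.exp (walkWeight w p) * f x' := by
  induction hp using IsWalk.head_induction_on with
  | singleton => rw [walkWeight_singleton, Real.exp_zero, one_mul]
  | cons a b q hab _ ih =>
    calc f a ≤ Real.exp (w a b) * f b := hf a b hab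
      _ ≤ Real.exp (w a b) * (Real.exp (walkWeight w (b :: q)) * f x') := by gcongr
      _ = Real.exp (walkWeight w (a :: b :: q)) * f x' := by
        rw [walkWeight_cons_cons, Real.exp_add, mul_assoc]

theorem graphDist_mem_of_isClosed (hw : ∀ a b, E a b → 0 ≤ w a b)
    (hconn : ∃ p, IsWalk E x x' p) {S : Set ℝ} (hS : IsClosed S)
    (hmem : ∀ p, IsWalk E x x' p → walkWeight w p ∈ S) : graphDist E w x x' ∈ S := by
  have hne : {c | ∃ p, IsWalk E x x' p ∧ walkWeight w p = c}.Nonempty :=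
    let ⟨p, hp⟩ := hconn; ⟨walkWeight w p, p, hp, rfl⟩
  have hbdd : BddBelow {c | ∃ p, IsWalk E x x' p ∧ walkWeight w p = c} := by
    refine ⟨0, ?_⟩
    rintro _ ⟨p, hp, rfl⟩
    exact walkWeight_nonneg hw hp
  refine closure_minimal ?_ hS (csInf_mem_closure hne hbdd)
  rintro _ ⟨p, hp, rfl⟩
  exact hmem p hp

end Walks

theorem edge_constraints_imply_graphDist_privacy_general {Z : Type*}
    {E : X → X → Prop} {w : X → X → ℝ} (hw : ∀ x x', E x x' → 0 ≤ w x x')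
    {K : X → Z → ℝ} (hedge : ∀ x x' z, E x x' → K x z ≤ Real.exp (w x x') * K x' z)
    {x x' : X} (hconn : ∃ p, IsWalk E x x' p) (z : Z) :
    K x z ≤ Real.exp (graphDist E w x x') * K x' z := by
  have hclosed : IsClosed {c : ℝ | K x z ≤ Real.exp c * K x' z} :=
    isClosed_le continuous_const (Real.continuous_exp.mul continuous_const)
  exact graphDist_mem_of_isClosed hw hconn hclosed fun _ hp =>
    le_exp_walkWeight_mul (f := fun y => K y z) (fun a b => hedge a b z) hp

/-- privacy constraints on the edges of a weighted graph imply
d_G-privacy for all pairs joined by a path. -/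
theorem edge_constraints_imply_graphDist_privacy [Fintype X]
    (E : X → X → Prop) (hsymE : ∀ x x', E x x' → E x' x)
    (w : X → X → ℝ) (hw : ∀ x x', 0 ≤ w x x')
    (K : X → X → ℝ) (hK : IsMechanism K)
    (hedge : ∀ x x' z, E x x' → K x z ≤ Real.exp (w x x') * K x' z) :
    ∀ x x' z : X, (∃ p : List X, IsWalk E x x' p) →
      K x z ≤ Real.exp (graphDist E w x x') * K x' z := by
  intro x x' z hconn
  exact edge_constraints_imply_graphDist_privacy_general (fun a b _ => hw a b) hedge hconn z
end
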